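/- arXiv:2507.16133 — 5 statements merged into one kernel-verified Lean document; each statement's English description precedes it below -/
import Mathlib

section
/- Let n ≥ 2, let Λ be an n-dimensional isotropic subspace of ℂ^{2n+1}, and let q ∈ {1,…,n−1} be an integer. If dim(Λ ∩ H_{{1,…,q}}) = n−q, then dim(Λ ∩ H_{{1,…,q,q+1,(q+1)̄}}) ≤ n−q−1. -/
/-!
Suppose that `M = Λ ∩ H_{1,…,q+1,(q+1)̄}` has dimension at least `n - q`. Let `F` be the span
of the `q + 1` basis vectors `e_1̄, …, e_q̄, e_{q+1}`. Since the vectors of `M` vanish at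
`1, …, q+1` and at the bar of `q+1`, the sum `M + F` is isotropic.

The sum is moreover direct. By rank–nullity, `Λ` projects onto the coordinates `1, …, q`
(`exists_mem_coord_eq_single`). A vector of `M ∩ F` is a combination of `e_1̄, …, e_q̄` orthogonal
to `Λ`, and pairing it with vectors of `Λ` having prescribed coordinates `1, …, q` shows that it
is zero. Thus `M + F` is an isotropic subspace of dimension at least `n + 1`, contradicting the
bound `IsIsotropic.finrank_le`, a consequence of nondegeneracy of the form.
-/

open scoped BigOperators

/-- Index set for the coordinates of `ℂ^{2n+1}`: `none` is the coordinate `0`,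
`some (q, false)` is the coordinate `q+1 ∈ [n]`, and `some (q, true)` is the barred
coordinate `(q+1)̄ ∈ [n]̄`. -/
abbrev Idx (n : ℕ) := Option (Fin n × Bool)

/-- The nondegenerate symmetric bilinear form
`y·z = 2 y₀ z₀ + Σ_q (y_q z_{q̄} + y_{q̄} z_q)` on `ℂ^{2n+1}`. -/
noncomputable def bform (n : ℕ) (y z : Idx n → ℂ) : ℂ :=
  2 * y none * z none +
    ∑ q : Fin n, (y (some (q, false)) * z (some (q, true)) +
      y (some (q, true)) * z (some (q, false)))

/-- A subspace is isotropic if the bilinear form vanishes identically on it. -/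
def IsIsotropic (n : ℕ) (Λ : Submodule ℂ (Idx n → ℂ)) : Prop :=
  ∀ y ∈ Λ, ∀ z ∈ Λ, bform n y z = 0

/-- `H_S`: the coordinate subspace of vectors whose coordinates indexed by `S` vanish. -/
noncomputable def coordSub (n : ℕ) (S : Set (Idx n)) : Submodule ℂ (Idx n → ℂ) where
  carrier := {v | ∀ i ∈ S, v i = 0}
  add_mem' := by
    intro a b ha hb i hi
    simp only [Pi.add_apply, ha i hi, hb i hi, add_zero]
  zero_mem' := by intro i hi; rfl
  smul_mem' := by
    intro c a ha i hi
    simp only [Pi.smul_apply, ha i hi, smul_zero]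

/-- `rk_Λ(S) = n − dim(Λ ∩ H_S)`. -/
noncomputable def rk (n : ℕ) (Λ : Submodule ℂ (Idx n → ℂ)) (S : Set (Idx n)) : ℕ :=
  n - Module.finrank ℂ ↥(Λ ⊓ coordSub n S)

/-- The set of coordinates in `[n] ∪ [n]̄` corresponding to a finite set of pairs. -/
def finIdx (n : ℕ) (S : Finset (Fin n × Bool)) : Set (Idx n) :=
  (fun p => (some p : Idx n)) '' ↑S

/-- A subset `S ⊆ [n] ∪ [n]̄` is admissible if it contains no pair `{q, q̄}`. -/
def Admissible (n : ℕ) (S : Finset (Fin n × Bool)) : Prop :=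
  ∀ q : Fin n, ¬((q, false) ∈ S ∧ (q, true) ∈ S)

/-- `rk_Λ(S)` for `S ⊆ [n] ∪ [n]̄`. -/
noncomputable def rkF (n : ℕ) (Λ : Submodule ℂ (Idx n → ℂ)) (S : Finset (Fin n × Bool)) : ℕ :=
  rk n Λ (finIdx n S)

/-- `g_Λ(S) = rk_Λ(S) − |S ∩ [n]̄|`. -/
noncomputable def gF (n : ℕ) (Λ : Submodule ℂ (Idx n → ℂ)) (S : Finset (Fin n × Bool)) : ℤ :=
  (rkF n Λ S : ℤ) - ((S.filter fun p => p.2 = true).card : ℤ)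

/-- The delta-matroid `𝒟(Λ)`: maximal admissible subsets of full rank. -/
def deltaMatroid (n : ℕ) (Λ : Submodule ℂ (Idx n → ℂ)) : Set (Finset (Fin n × Bool)) :=
  {S | Admissible n S ∧ S.card = n ∧ rkF n Λ S = n}

/-- `x(S) = Σ_{q ∈ S ∩ [n]} x_q − Σ_{q̄ ∈ S ∩ [n]̄} x_q`. -/
def xval (n : ℕ) (x : Fin n → ℝ) (S : Finset (Fin n × Bool)) : ℝ :=
  ∑ p ∈ S.filter (fun p => p.2 = false), x p.1 -
    ∑ p ∈ S.filter (fun p => p.2 = true), x p.1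

/-- The polytope `𝒫(Λ)` cut out by the inequalities `x(S) ≤ g_Λ(S)` over admissible `S`. -/
def polytopeP (n : ℕ) (Λ : Submodule ℂ (Idx n → ℂ)) : Set (Fin n → ℝ) :=
  {x | ∀ S : Finset (Fin n × Bool), Admissible n S → xval n x S ≤ (gF n Λ S : ℝ)}

/-- `χ(S')`: the 0–1 vector whose `q`-th coordinate is `1` exactly when `q ∈ S' ∩ [n]`. -/
def chi (n : ℕ) (S : Finset (Fin n × Bool)) : Fin n → ℝ :=
  fun q => if (q, false) ∈ S then 1 else 0

/-- `S₁ ⊔ S₂ = {a ∈ S₁ ∪ S₂ : ā ∉ S₁ ∪ S₂}`. -/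
def sqcup (n : ℕ) (S₁ S₂ : Finset (Fin n × Bool)) : Finset (Fin n × Bool) :=
  (S₁ ∪ S₂).filter (fun p => (p.1, !p.2) ∉ S₁ ∪ S₂)

/-- `bform` as a Mathlib bilinear form. -/
noncomputable def bformBilin (n : ℕ) : LinearMap.BilinForm ℂ (Idx n → ℂ) :=
  LinearMap.mk₂ ℂ (bform n)
    (fun x y z => by
      have e : bform n (x + y) z = bform n x z + bform n y z := by
        simp only [bform, Pi.add_apply]
        rw [add_add_add_comm, ← Finset.sum_add_distrib]
        congr 1
        · ring
        · exact Finset.sum_congr rfl fun i _ => by ring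
      exact e)
    (fun c x y => by
      simp only [bform, Pi.smul_apply, smul_eq_mul, mul_add, Finset.mul_sum]
      congr 1
      · ring
      · exact Finset.sum_congr rfl fun i _ => by ring)
    (fun x y z => by
      have e : bform n x (y + z) = bform n x y + bform n x z := by
        simp only [bform, Pi.add_apply]
        rw [add_add_add_comm, ← Finset.sum_add_distrib]
        congr 1
        · ring
        · exact Finset.sum_congr rfl fun i _ => by ring
      exact e)
    (fun c x y => by
      simp only [bform, Pi.smul_apply, smul_eq_mul, mul_add, Finset.mul_sum]
      congr 1
      · ring
      · exact Finset.sum_congr rfl fun i _ => by ring)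

lemma bformBilin_apply (n : ℕ) (x y : Idx n → ℂ) : bformBilin n x y = bform n x y := rfl

lemma bform_comm (n : ℕ) (x y : Idx n → ℂ) : bform n x y = bform n y x := by
  simp only [bform]
  congr 1
  · ring
  · exact Finset.sum_congr rfl fun i _ => by ring

lemma ker_bformBilin (n : ℕ) : LinearMap.ker (bformBilin n) = ⊥ := by
  rw [LinearMap.ker_eq_bot']
  intro x hx
  have h (y : Idx n → ℂ) : bform n x y = 0 := by
    rw [← bformBilin_apply, hx]
    rfl
  funext i
  rcases i with _ | ⟨i, b⟩
  · simpa [bform] using h (Pi.single none 1)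
  · cases b
    · simpa [bform, Pi.single_apply] using h (Pi.single (some (i, true)) 1)
    · simpa [bform, Pi.single_apply] using h (Pi.single (some (i, false)) 1)

/-- An isotropic subspace lies in its orthogonal complement, hence has dimension at most
`(2n+1)/2`. -/
lemma IsIsotropic.finrank_le {n : ℕ} {W : Submodule ℂ (Idx n → ℂ)} (hW : IsIsotropic n W) :
    Module.finrank ℂ W ≤ n := by
  have h1 := LinearMap.BilinForm.finrank_add_finrank_orthogonal' (B := bformBilin n) W
  have h2 : W ≤ (bformBilin n).orthogonal W := fun x hx y hy => hW y hy x hx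
  have h3 := Submodule.finrank_mono h2
  rw [ker_bformBilin, inf_bot_eq, finrank_bot, Module.finrank_fintype_fun_eq_card] at h1
  simp only [Fintype.card_option, Fintype.card_prod, Fintype.card_fin, Fintype.card_bool] at h1
  omega

/-- If `Λ ∩ H_{1,…,q}` has the least possible dimension `n - q`, then `Λ` projects onto the
coordinates `1, …, q`. -/
lemma exists_mem_coord_eq_single {n q : ℕ} (hq : q ≤ n) {Λ : Submodule ℂ (Idx n → ℂ)}
    (hΛ : Module.finrank ℂ Λ = n)
    (h : Module.finrank ℂ ↥(Λ ⊓ coordSub n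
      {x | ∃ i : Fin n, (i : ℕ) < q ∧ x = some (i, false)}) = n - q)
    (i : Fin n) (hi : (i : ℕ) < q) :
    ∃ w ∈ Λ, ∀ j : Fin n, (j : ℕ) < q → w (some (j, false)) = if j = i then 1 else 0 := by
  let s : Fin q → Idx n := fun j => some (Fin.castLE hq j, false)
  let p : Λ →ₗ[ℂ] (Fin q → ℂ) := (LinearMap.funLeft ℂ ℂ s).domRestrict Λ
  have hker : (LinearMap.ker p).map Λ.subtype = Λ ⊓ coordSub n
      {x | ∃ i : Fin n, (i : ℕ) < q ∧ x = some (i, false)} := by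
    ext v
    constructor
    · rintro ⟨w, hw, rfl⟩
      refine ⟨w.2, ?_⟩
      rintro _ ⟨j, hj, rfl⟩
      exact congrFun (LinearMap.mem_ker.1 hw) ⟨j, hj⟩
    · rintro ⟨hv, hv'⟩
      refine ⟨⟨v, hv⟩, ?_, rfl⟩
      refine LinearMap.mem_ker.2 (funext fun j => ?_)
      exact hv' _ ⟨Fin.castLE hq j, j.2, rfl⟩
  have hk : Module.finrank ℂ (LinearMap.ker p) = n - q := by
    rw [← h, ← hker, Submodule.finrank_map_subtype_eq]
  have hrange : LinearMap.range p = ⊤ := by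
    apply Submodule.eq_top_of_finrank_eq
    have := LinearMap.finrank_range_add_finrank_ker p
    rw [Module.finrank_fintype_fun_eq_card, Fintype.card_fin]
    omega
  obtain ⟨w, hw⟩ := LinearMap.range_eq_top.1 hrange (Pi.single ⟨i, hi⟩ 1)
  refine ⟨w, w.2, fun j hj => ?_⟩
  have := congrFun hw ⟨j, hj⟩
  simp only [Pi.single_apply, Fin.mk.injEq] at this
  simp only [Fin.ext_iff]
  exact this

/-- The indices `1̄, …, q̄, q+1` of the basis vectors spanning `F`. -/
def extraIdx {n q : ℕ} (hq : q + 1 ≤ n) (j : Fin (q + 1)) : Idx n :=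
  some (Fin.castLE hq j, decide ((j : ℕ) < q))

lemma extraIdx_injective {n q : ℕ} (hq : q + 1 ≤ n) : Function.Injective (extraIdx hq) := by
  intro a b hab
  simp only [extraIdx, Option.some.injEq, Prod.mk.injEq] at hab
  exact Fin.castLE_injective hq hab.1

/-- The span of `e_1̄, …, e_q̄, e_{q+1}`. -/
noncomputable def extraSub {n q : ℕ} (hq : q + 1 ≤ n) : Submodule ℂ (Idx n → ℂ) :=
  LinearMap.range (Function.ExtendByZero.linearMap ℂ (extraIdx hq))

lemma finrank_extraSub {n q : ℕ} (hq : q + 1 ≤ n) :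
    Module.finrank ℂ (extraSub hq) = q + 1 := by
  rw [extraSub, LinearMap.finrank_range_of_inj, Module.finrank_fintype_fun_eq_card,
    Fintype.card_fin]
  exact Function.extend_injective (extraIdx_injective hq) _

lemma apply_eq_zero_of_mem_extraSub {n q : ℕ} {hq : q + 1 ≤ n} {f : Idx n → ℂ}
    (hf : f ∈ extraSub hq) {x : Idx n} (hx : ∀ j, extraIdx hq j ≠ x) : f x = 0 := by
  obtain ⟨c, rfl⟩ := hf
  exact Function.extend_apply' _ _ _ fun ⟨j, hj⟩ => hx j hj

lemma extraSub_none {n q : ℕ} {hq : q + 1 ≤ n} {f : Idx n → ℂ} (hf : f ∈ extraSub hq) :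
    f none = 0 :=
  apply_eq_zero_of_mem_extraSub hf fun _ => Option.some_ne_none _

lemma extraSub_false {n q : ℕ} {hq : q + 1 ≤ n} {f : Idx n → ℂ} (hf : f ∈ extraSub hq)
    {i : Fin n} (hi : (i : ℕ) ≠ q) : f (some (i, false)) = 0 := by
  refine apply_eq_zero_of_mem_extraSub hf fun j hj => hi ?_
  simp only [extraIdx, Option.some.injEq, Prod.mk.injEq, Fin.ext_iff, Fin.val_castLE,
    decide_eq_false_iff_not] at hj
  omega

lemma extraSub_true {n q : ℕ} {hq : q + 1 ≤ n} {f : Idx n → ℂ} (hf : f ∈ extraSub hq)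
    {i : Fin n} (hi : q ≤ (i : ℕ)) : f (some (i, true)) = 0 := by
  refine apply_eq_zero_of_mem_extraSub hf fun j hj => ?_
  simp only [extraIdx, Option.some.injEq, Prod.mk.injEq, Fin.ext_iff, Fin.val_castLE,
    decide_eq_true_eq] at hj
  omega

theorem stmt1 (n q : ℕ) (hn : 2 ≤ n) (hq1 : 1 ≤ q) (hq2 : q ≤ n - 1)
    (Λ : Submodule ℂ (Idx n → ℂ)) (hiso : IsIsotropic n Λ)
    (hΛ : Module.finrank ℂ ↥Λ = n)
    (h : Module.finrank ℂ ↥(Λ ⊓ coordSub n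
      {x | ∃ i : Fin n, (i : ℕ) < q ∧ x = some (i, false)}) = n - q) :
    Module.finrank ℂ ↥(Λ ⊓ coordSub n
      ({x | ∃ i : Fin n, (i : ℕ) ≤ q ∧ x = some (i, false)} ∪
        {x | ∃ i : Fin n, (i : ℕ) = q ∧ x = some (i, true)})) ≤ n - q - 1 := by
  by_contra hcon
  have hq : q + 1 ≤ n := by omega
  have hsurj := exists_mem_coord_eq_single (by omega) hΛ h
  set M := Λ ⊓ coordSub n
      ({x | ∃ i : Fin n, (i : ℕ) ≤ q ∧ x = some (i, false)} ∪
        {x | ∃ i : Fin n, (i : ℕ) = q ∧ x = some (i, true)}) with hM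
  have hMdim : n - q ≤ Module.finrank ℂ M := by omega
  have hMΛ {m} (hm : m ∈ M) : m ∈ Λ := hm.1
  have hMf {m} (hm : m ∈ M) {i : Fin n} (hi : (i : ℕ) ≤ q) : m (some (i, false)) = 0 :=
    hm.2 _ (Or.inl ⟨i, hi, rfl⟩)
  have hMt {m} (hm : m ∈ M) {i : Fin n} (hi : (i : ℕ) = q) : m (some (i, true)) = 0 :=
    hm.2 _ (Or.inr ⟨i, hi, rfl⟩)
  have hMF {m f} (hm : m ∈ M) (hf : f ∈ extraSub hq) : bform n m f = 0 := by
    rw [bform, extraSub_none hf, mul_zero, zero_add]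
    refine Finset.sum_eq_zero fun i _ => ?_
    rcases lt_trichotomy (i : ℕ) q with hi | hi | hi
    · rw [hMf hm hi.le, extraSub_false hf hi.ne]; ring
    · rw [hMf hm hi.le, hMt hm hi]; ring
    · rw [extraSub_false hf hi.ne', extraSub_true hf hi.le]; ring
  have hFF {f g} (hf : f ∈ extraSub hq) (hg : g ∈ extraSub hq) : bform n f g = 0 := by
    rw [bform, extraSub_none hf, mul_zero, zero_mul, zero_add]
    refine Finset.sum_eq_zero fun i _ => ?_
    by_cases hi : (i : ℕ) = q
    · rw [extraSub_true hf hi.ge, extraSub_true hg hi.ge]; ring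
    · rw [extraSub_false hf hi, extraSub_false hg hi]; ring
  have hsum : IsIsotropic n (M ⊔ extraSub hq) := by
    intro y hy z hz
    obtain ⟨m, hm, f, hf, rfl⟩ := Submodule.mem_sup.1 hy
    obtain ⟨m', hm', f', hf', rfl⟩ := Submodule.mem_sup.1 hz
    rw [← bformBilin_apply]
    simp only [map_add, LinearMap.add_apply, bformBilin_apply]
    rw [hiso m (hMΛ hm) m' (hMΛ hm'), hMF hm hf', bform_comm n f m', hMF hm' hf, hFF hf hf']
    ring
  have hdisj : M ⊓ extraSub hq = ⊥ := by
    rw [eq_bot_iff]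
    rintro v ⟨hvM, hvF⟩
    rw [Submodule.mem_bot]
    funext x
    rcases x with _ | ⟨i, b⟩
    · exact extraSub_none hvF
    have hfalse (i : Fin n) : v (some (i, false)) = 0 := by
      by_cases hi : (i : ℕ) = q
      · exact hMf hvM hi.le
      · exact extraSub_false hvF hi
    cases b
    · exact hfalse i
    by_cases hi : (i : ℕ) < q
    · obtain ⟨w, hw, hwi⟩ := hsurj i hi
      -- Pairing `v` with `w` reads off the coordinate of `v` at the bar of `i`.
      have h0 := hiso w hw v (hMΛ hvM)
      rw [bform, extraSub_none hvF, mul_zero, zero_add, Finset.sum_eq_single i] at h0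
      · simpa [hwi i hi, hfalse] using h0
      · intro j _ hji
        rw [hfalse j, mul_zero, add_zero]
        by_cases hj : (j : ℕ) < q
        · rw [hwi j hj, if_neg hji, zero_mul]
        · rw [extraSub_true hvF (not_lt.1 hj), mul_zero]
      · exact fun hi' => absurd (Finset.mem_univ i) hi'
    · exact extraSub_true hvF (not_lt.1 hi)
  have hdim := Submodule.finrank_sup_add_finrank_inf_eq M (extraSub hq)
  rw [hdisj, finrank_bot, finrank_extraSub] at hdim
  have := hsum.finrank_le
  omega
end

section
/- Let n ≥ 2 and let Λ be an n-dimensional isotropic subspace of ℂ^{2n+1}. Let S ⊆ [n] ∪ [n]̄ be an admissible subset and let J ⊆ [n] be such that (J ∪ J̄) ∩ S = ∅; write ℓ = |J|. Then there exists an admissible subset J₊ ⊆ J ∪ J̄ with |J₊| = ℓ such that rk_Λ(S ∪ J₊) = rk_Λ(S) + ℓ. -/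
/-!
The set `J₊` is built one index at a time, so the point is the case `J = {j}`: when neither `j` nor
`j̄` lies in the admissible set `S`, adding one of them raises the rank.

If not, the coordinate functionals `v_j` and `v_{j̄}` both vanish on `Λ ∩ H_S`, so on `Λ` each of them
is a linear combination of the functionals `v_s`, `s ∈ S`. Through the bilinear form these two
relations become vectors `w = e_{j̄} - ∑ a_s e_{s̄}` and `w' = e_j - ∑ b_s e_{s̄}` orthogonal to `Λ`
(`exists_relVec`). As `S` is admissible and avoids `j`, `j̄`, both are isotropic, while `w · w' = 1`
(`polar_relVec`). An isotropic subspace of `ℂ^{2n+1}` has dimension at most `n`, so `Λ` is a maximal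
one and contains every isotropic vector orthogonal to it (`mem_of_isotropic_of_orthogonal`). Thus
`w, w' ∈ Λ`, against the isotropy of `Λ`.
-/

open scoped BigOperators

/-- `bform` as a Mathlib bilinear form. -/
noncomputable def polar (n : ℕ) : LinearMap.BilinForm ℂ (Idx n → ℂ) :=
  LinearMap.mk₂ ℂ (bform n)
    (by
      intro x y z
      simp only [bform, Pi.add_apply, add_mul, mul_add, Finset.sum_add_distrib]
      ring)
    (by
      intro c x y
      simp only [bform, Pi.smul_apply, smul_eq_mul, mul_add, Finset.mul_sum, mul_assoc]
      congr 1
      ring)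
    (by
      intro x y z
      simp only [bform, Pi.add_apply, mul_add, Finset.sum_add_distrib]
      ring)
    (by
      intro c x y
      simp only [bform, Pi.smul_apply, smul_eq_mul, mul_add, Finset.mul_sum]
      congr 1
      · ring
      · refine Finset.sum_congr rfl fun q _ => ?_
        ring)

lemma polar_apply (n : ℕ) (y z : Idx n → ℂ) : polar n y z = bform n y z := rfl

lemma polar_comm (n : ℕ) (y z : Idx n → ℂ) : polar n y z = polar n z y := by
  simp only [polar_apply, bform]
  congr 1
  · ring
  · refine Finset.sum_congr rfl fun q _ => ?_
    ring

/-- The involution `q ↔ q̄` on `[n] ∪ [n]̄`. -/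
def bar {n : ℕ} (p : Fin n × Bool) : Fin n × Bool := (p.1, !p.2)

lemma polar_single_some (n : ℕ) (p : Fin n × Bool) (z : Idx n → ℂ) :
    polar n (Pi.single (some (bar p)) 1) z = z (some p) := by
  obtain ⟨j, b⟩ := p
  cases b <;> simp [polar_apply, bform, bar, Pi.single_apply]

lemma polar_single_none (n : ℕ) (z : Idx n → ℂ) :
    polar n (Pi.single none 1) z = 2 * z none := by
  simp [polar_apply, bform]

lemma polar_ker (n : ℕ) : LinearMap.ker (polar n) = ⊥ := by
  rw [LinearMap.ker_eq_bot']
  intro z hz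
  funext i
  have h : ∀ y, polar n y z = 0 := fun y => by rw [polar_comm, hz]; rfl
  rcases i with _ | p
  · have := h (Pi.single none 1)
    rw [polar_single_none] at this
    simpa using this
  · have := h (Pi.single (some (bar p)) 1)
    rwa [polar_single_some] at this

lemma finrank_le_of_isotropic (n : ℕ) (W : Submodule ℂ (Idx n → ℂ))
    (hW : ∀ y ∈ W, ∀ z ∈ W, polar n y z = 0) : Module.finrank ℂ W ≤ n := by
  have h := LinearMap.BilinForm.finrank_add_finrank_orthogonal' (B := polar n) W
  have h0 : Module.finrank ℂ ↥(W ⊓ LinearMap.ker (polar n)) = 0 := by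
    rw [polar_ker, inf_bot_eq, finrank_bot]
  rw [h0] at h
  have hle : W ≤ (polar n).orthogonal W := fun z hz y hy => hW y hy z hz
  have h2 := Submodule.finrank_mono hle
  simp at h
  omega

/-- An `n`-dimensional isotropic subspace is maximal isotropic. -/
lemma mem_of_isotropic_of_orthogonal {n : ℕ} {Λ : Submodule ℂ (Idx n → ℂ)}
    (hiso : IsIsotropic n Λ) (hΛ : Module.finrank ℂ Λ = n) {w : Idx n → ℂ}
    (hw : polar n w w = 0) (hwΛ : ∀ v ∈ Λ, polar n w v = 0) : w ∈ Λ := by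
  have hsup : Module.finrank ℂ ↥(Λ ⊔ ℂ ∙ w) ≤ n := by
    refine finrank_le_of_isotropic n _ fun y hy z hz => ?_
    obtain ⟨u, hu, x, hx, rfl⟩ := Submodule.mem_sup.1 hy
    obtain ⟨u', hu', x', hx', rfl⟩ := Submodule.mem_sup.1 hz
    obtain ⟨c, rfl⟩ := Submodule.mem_span_singleton.1 hx
    obtain ⟨c', rfl⟩ := Submodule.mem_span_singleton.1 hx'
    have h1 : polar n u u' = 0 := hiso u hu u' hu'
    have h2 : polar n u w = 0 := by rw [polar_comm, hwΛ u hu]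
    simp [h1, h2, hw, hwΛ u' hu']
  have heq : Λ = Λ ⊔ ℂ ∙ w :=
    Submodule.eq_of_le_of_finrank_le le_sup_left (hsup.trans hΛ.ge)
  rw [heq]
  exact Submodule.mem_sup_right (Submodule.mem_span_singleton_self w)

/-- The vector `e_{p̄} - ∑_{s ∈ S} a_s e_{s̄}`, whose pairing with `z` is `z_p - ∑_{s ∈ S} a_s z_s`. -/
noncomputable def relVec {n : ℕ} (S : Finset (Fin n × Bool)) (p : Fin n × Bool) (a : S → ℂ) :
    Idx n → ℂ :=
  Pi.single (some (bar p)) 1 - ∑ s : S, a s • Pi.single (some (bar s.1)) 1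

lemma polar_relVec_left {n : ℕ} (S : Finset (Fin n × Bool)) (p : Fin n × Bool) (a : S → ℂ)
    (z : Idx n → ℂ) :
    polar n (relVec S p a) z = z (some p) - ∑ s : S, a s * z (some s.1) := by
  simp [relVec, polar_single_some, LinearMap.sum_apply]

lemma relVec_apply_eq {n : ℕ} {S : Finset (Fin n × Bool)} {p : Fin n × Bool} (a : S → ℂ)
    {q : Fin n × Bool} (hq : bar q ∉ S) :
    relVec S p a (some q) = if q = bar p then 1 else 0 := by
  have h : ∀ s : S, q ≠ bar s.1 := by
    rintro s rfl
    apply hq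
    simp [bar]
  simp [relVec, Finset.sum_apply, Pi.single_apply, h]

lemma bar_notMem {n : ℕ} {S : Finset (Fin n × Bool)} (hS : Admissible n S) {s : Fin n × Bool}
    (hs : s ∈ S) : bar s ∉ S := by
  obtain ⟨q, b⟩ := s
  intro h
  cases b
  · exact hS q ⟨hs, h⟩
  · exact hS q ⟨h, hs⟩

/-- For admissible `S` avoiding `j` and `j̄`, the correction terms `e_{s̄}` contribute nothing to
the pairings among the vectors attached to `j` and `j̄`. -/
lemma polar_relVec {n : ℕ} {S : Finset (Fin n × Bool)} (hS : Admissible n S) {j : Fin n}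
    (hj : ∀ b : Bool, (j, b) ∉ S) (b b' : Bool) (a a' : S → ℂ) :
    polar n (relVec S (j, b) a) (relVec S (j, b') a') = if b = !b' then 1 else 0 := by
  have h : ∀ s : S, relVec S (j, b') a' (some s.1) = 0 := by
    intro s
    rw [relVec_apply_eq _ (bar_notMem hS s.2), if_neg]
    intro hs
    exact hj (!b') (by simpa [bar, hs] using s.2)
  rw [polar_relVec_left, relVec_apply_eq _ (hj _)]
  simp [h, bar]

lemma mem_coordSub_finIdx {n : ℕ} {S : Finset (Fin n × Bool)} {v : Idx n → ℂ} :
    v ∈ coordSub n (finIdx n S) ↔ ∀ s ∈ S, v (some s) = 0 := by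
  exact Set.forall_mem_image

/-- A coordinate functional vanishing on `Λ ∩ H_S` is dependent on those of `S`; the dependency,
read through the bilinear form, is a vector orthogonal to `Λ`. -/
lemma exists_relVec {n : ℕ} {Λ : Submodule ℂ (Idx n → ℂ)} {S : Finset (Fin n × Bool)}
    {p : Fin n × Bool} (h : ∀ v ∈ Λ ⊓ coordSub n (finIdx n S), v (some p) = 0) :
    ∃ a : S → ℂ, ∀ v ∈ Λ, polar n (relVec S p a) v = 0 := by
  let L : Fin n × Bool → Λ →ₗ[ℂ] ℂ := fun q => (LinearMap.proj (some q)).domRestrict Λ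
  have hL : ⨅ s : S, LinearMap.ker (L s.1) ≤ LinearMap.ker (L p) := by
    intro v hv
    simp only [Submodule.mem_iInf, LinearMap.mem_ker] at hv ⊢
    exact h v ⟨v.2, mem_coordSub_finIdx.2 fun s hs => hv ⟨s, hs⟩⟩
  obtain ⟨a, ha⟩ := (Submodule.mem_span_range_iff_exists_fun ℂ).1 (mem_span_of_iInf_ker_le_ker hL)
  refine ⟨a, fun v hv => ?_⟩
  have := LinearMap.congr_fun ha ⟨v, hv⟩
  rw [polar_relVec_left, sub_eq_zero]
  simpa [L, LinearMap.sum_apply] using this.symm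

lemma exists_coord_ne_zero {n : ℕ} {Λ : Submodule ℂ (Idx n → ℂ)} (hiso : IsIsotropic n Λ)
    (hΛ : Module.finrank ℂ Λ = n) {S : Finset (Fin n × Bool)} (hS : Admissible n S) {j : Fin n}
    (hj : ∀ b : Bool, (j, b) ∉ S) :
    ∃ b : Bool, ∃ v ∈ Λ ⊓ coordSub n (finIdx n S), v (some (j, b)) ≠ 0 := by
  by_contra! hcon
  have key : ∀ b : Bool, ∃ a : S → ℂ, relVec S (j, b) a ∈ Λ := by
    intro b
    obtain ⟨a, ha⟩ := exists_relVec (hcon b)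
    refine ⟨a, mem_of_isotropic_of_orthogonal hiso hΛ ?_ ha⟩
    rw [polar_relVec hS hj]
    simp
  obtain ⟨a, ha⟩ := key false
  obtain ⟨a', ha'⟩ := key true
  have h0 := hiso _ ha _ ha'
  rw [← polar_apply, polar_relVec hS hj] at h0
  simp at h0

lemma rkF_insert {n : ℕ} {Λ : Submodule ℂ (Idx n → ℂ)} (hΛ : Module.finrank ℂ Λ = n)
    {S : Finset (Fin n × Bool)} {p : Fin n × Bool} {v : Idx n → ℂ}
    (hv : v ∈ Λ ⊓ coordSub n (finIdx n S)) (hvp : v (some p) ≠ 0) :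
    rkF n Λ (insert p S) = rkF n Λ S + 1 := by
  set K := Λ ⊓ coordSub n (finIdx n S)
  let f : Module.Dual ℂ K := (LinearMap.proj (some p)).domRestrict K
  have hf : f ≠ 0 := fun h => hvp (LinearMap.congr_fun h ⟨v, hv⟩)
  have hker := Module.Dual.finrank_ker_add_one_of_ne_zero hf
  have hmap : (LinearMap.ker f).map K.subtype = Λ ⊓ coordSub n (finIdx n (insert p S)) := by
    ext u
    simp only [Submodule.mem_map, LinearMap.mem_ker, Submodule.mem_inf, mem_coordSub_finIdx,
      Finset.forall_mem_insert]
    constructor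
    · rintro ⟨⟨x, hx⟩, hx0, rfl⟩
      exact ⟨hx.1, hx0, mem_coordSub_finIdx.1 hx.2⟩
    · rintro ⟨h1, h2, h3⟩
      exact ⟨⟨u, h1, mem_coordSub_finIdx.2 h3⟩, h2, rfl⟩
  have hle : Module.finrank ℂ K ≤ n := (Submodule.finrank_mono inf_le_left).trans hΛ.le
  rw [← Submodule.finrank_map_subtype_eq, hmap] at hker
  -- `K ≤ Λ` keeps the natural subtraction in `rk` from truncating.
  change n - Module.finrank ℂ ↥(Λ ⊓ coordSub n (finIdx n (insert p S))) =
    n - Module.finrank ℂ K + 1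
  omega

theorem stmt2 (n : ℕ) (hn : 2 ≤ n)
    (Λ : Submodule ℂ (Idx n → ℂ)) (hiso : IsIsotropic n Λ)
    (hΛ : Module.finrank ℂ ↥Λ = n)
    (S : Finset (Fin n × Bool)) (hS : Admissible n S)
    (J : Finset (Fin n)) (hJ : ∀ j ∈ J, ∀ b : Bool, (j, b) ∉ S) :
    ∃ Jp : Finset (Fin n × Bool), Admissible n Jp ∧ (∀ p ∈ Jp, p.1 ∈ J) ∧
      Jp.card = J.card ∧ rkF n Λ (S ∪ Jp) = rkF n Λ S + J.card := by
  induction J using Finset.induction_on with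
  | empty => exact ⟨∅, by simp [Admissible]⟩
  | insert j J hjJ ih =>
    obtain ⟨Jp, hadm, hsub, hcard, hrk⟩ := ih fun i hi => hJ i (Finset.mem_insert_of_mem hi)
    have hjJp : ∀ b : Bool, (j, b) ∉ Jp := fun b hb => hjJ (hsub _ hb)
    have hunion : Admissible n (S ∪ Jp) := by
      rintro q ⟨h1, h2⟩
      rcases Finset.mem_union.1 h1 with h1 | h1 <;> rcases Finset.mem_union.1 h2 with h2 | h2
      · exact hS q ⟨h1, h2⟩
      · exact hJ q (Finset.mem_insert_of_mem (hsub _ h2)) _ h1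
      · exact hJ q (Finset.mem_insert_of_mem (hsub _ h1)) _ h2
      · exact hadm q ⟨h1, h2⟩
    have hjU : ∀ b : Bool, (j, b) ∉ S ∪ Jp := by
      intro b
      simp [hJ j (Finset.mem_insert_self j J) b, hjJp b]
    obtain ⟨b, v, hv, hvb⟩ := exists_coord_ne_zero hiso hΛ hunion hjU
    refine ⟨insert (j, b) Jp, ?_, ?_, ?_, ?_⟩
    · rintro q ⟨h1, h2⟩
      rcases Finset.mem_insert.1 h1 with h1 | h1 <;> rcases Finset.mem_insert.1 h2 with h2 | h2
      · simp_all
      · exact hjJp true (by simp_all)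
      · exact hjJp false (by simp_all)
      · exact hadm q ⟨h1, h2⟩
    · intro p hp
      rcases Finset.mem_insert.1 hp with rfl | hp
      · exact Finset.mem_insert_self _ _
      · exact Finset.mem_insert_of_mem (hsub p hp)
    · rw [Finset.card_insert_of_notMem (hjJp b), Finset.card_insert_of_notMem hjJ, hcard]
    · rw [Finset.union_insert, rkF_insert hΛ hv hvb, hrk, Finset.card_insert_of_notMem hjJ,
        add_assoc]
end

section
/- Let n ≥ 2 and let Λ be an n-dimensional isotropic subspace of ℂ^{2n+1}. Then the delta-matroid 𝒟(Λ) is nonempty; that is, there exists a maximal admissible subset S ⊆ [n] ∪ [n]̄ with rk_Λ(S) = n. -/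
/-!
A maximal admissible set is the graph `{(q, f q)}` of a function `f : Fin n → Bool`. Choose `f`
so that `dim (Λ ∩ H_S)` is minimal. If `v ≠ 0` lies in `Λ ∩ H_S`, then `v·v = 2 v₀²` gives
`v₀ = 0`, so `v` has a nonzero coordinate `a` whose partner `ā` lies in `S`. Put
`S' = S - ā + a`. For `w ∈ Λ ∩ H_{S'}` all terms of `w·v = 0` vanish except `w_ā v_a`, so
`w_ā = 0`. Hence `Λ ∩ H_{S'} ⊆ Λ ∩ H_S`, strictly because `v_a ≠ 0`, which contradicts
minimality. So `Λ ∩ H_S = 0` and `S` has full rank.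
-/

open scoped BigOperators

/-- The maximal admissible set that picks the coordinate `(q, f q)` from each pair `{q, q̄}`. -/
def graphSet (n : ℕ) (f : Fin n → Bool) : Finset (Fin n × Bool) :=
  Finset.univ.image fun q => (q, f q)

lemma mem_graphSet {n : ℕ} {f : Fin n → Bool} {q : Fin n} {b : Bool} :
    (q, b) ∈ graphSet n f ↔ f q = b := by
  simp [graphSet]

lemma admissible_graphSet (n : ℕ) (f : Fin n → Bool) : Admissible n (graphSet n f) := by
  rintro q ⟨h₁, h₂⟩
  rw [mem_graphSet] at h₁ h₂
  simp [h₁] at h₂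

lemma card_graphSet (n : ℕ) (f : Fin n → Bool) : (graphSet n f).card = n := by
  rw [graphSet, Finset.card_image_of_injective _ fun a b h => congrArg Prod.fst h,
    Finset.card_univ, Fintype.card_fin]

lemma mem_coordSub_graphSet {n : ℕ} {f : Fin n → Bool} {v : Idx n → ℂ} :
    v ∈ coordSub n (finIdx n (graphSet n f)) ↔ ∀ q, v (some (q, f q)) = 0 := by
  constructor
  · intro h q
    exact h _ ⟨(q, f q), by simp [mem_graphSet], rfl⟩
  · rintro h _ ⟨⟨q, b⟩, hq, rfl⟩
    have hb : f q = b := mem_graphSet.1 (by simpa using hq)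
    subst hb
    exact h q

/-- The form, with the two coordinates of each pair ordered by a choice function `f`. -/
lemma bform_eq (n : ℕ) (f : Fin n → Bool) (y z : Idx n → ℂ) :
    bform n y z = 2 * y none * z none +
      ∑ q : Fin n, (y (some (q, f q)) * z (some (q, !f q)) +
        y (some (q, !f q)) * z (some (q, f q))) := by
  unfold bform
  congr 1
  refine Finset.sum_congr rfl fun q _ => ?_
  cases f q
  · rfl
  · exact add_comm _ _

/-- The exchange step: if `Λ ∩ H_S ≠ 0`, swapping one element of `S` for its partner strictly
shrinks the intersection. -/
lemma exists_lt_of_ne_bot {n : ℕ} {Λ : Submodule ℂ (Idx n → ℂ)} (hiso : IsIsotropic n Λ)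
    (f : Fin n → Bool) (hf : Λ ⊓ coordSub n (finIdx n (graphSet n f)) ≠ ⊥) :
    ∃ g : Fin n → Bool, Λ ⊓ coordSub n (finIdx n (graphSet n g)) <
      Λ ⊓ coordSub n (finIdx n (graphSet n f)) := by
  obtain ⟨v, hv, hv0⟩ := Submodule.exists_mem_ne_zero_of_ne_bot hf
  have hvf := mem_coordSub_graphSet.1 hv.2
  have hnone : v none = 0 := by
    have h := hiso v hv.1 v hv.1
    rw [bform_eq n f] at h
    simpa [hvf] using h
  obtain ⟨q, hq⟩ : ∃ q, v (some (q, !f q)) ≠ 0 := by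
    by_contra! h
    refine hv0 (funext fun i => ?_)
    rcases i with _ | ⟨q, b⟩
    · exact hnone
    · by_cases hb : b = f q
      · subst hb
        exact hvf q
      · rw [Bool.eq_not_of_ne hb]
        exact h q
  refine ⟨Function.update f q (!f q), SetLike.lt_iff_le_and_exists.2 ⟨fun w hw => ?_, v, hv, ?_⟩⟩
  · have hwg := mem_coordSub_graphSet.1 hw.2
    have hne : ∀ p, p ≠ q → w (some (p, f p)) = 0 := fun p hp => by
      simpa [Function.update_of_ne hp] using hwg p
    refine ⟨hw.1, mem_coordSub_graphSet.2 fun p => ?_⟩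
    by_cases hp : p = q
    · subst hp
      have h := hiso w hw.1 v hv.1
      -- Only the term `w_ā v_a` of the form survives.
      rw [bform_eq n f, Finset.sum_eq_single p (fun r _ hr => by simp [hvf, hne r hr])
        (by simp)] at h
      simpa [hnone, hvf, hq] using h
    · exact hne p hp
  · intro hvg
    exact hq (by simpa using mem_coordSub_graphSet.1 hvg.2 q)

theorem stmt3 (n : ℕ) (hn : 2 ≤ n)
    (Λ : Submodule ℂ (Idx n → ℂ)) (hiso : IsIsotropic n Λ)
    (hΛ : Module.finrank ℂ ↥Λ = n) :
    ∃ S : Finset (Fin n × Bool), Admissible n S ∧ S.card = n ∧ rkF n Λ S = n := by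
  obtain ⟨f, hf⟩ := Finite.exists_min fun f : Fin n → Bool =>
    Module.finrank ℂ ↥(Λ ⊓ coordSub n (finIdx n (graphSet n f)))
  have hbot : Λ ⊓ coordSub n (finIdx n (graphSet n f)) = ⊥ := by
    by_contra h
    obtain ⟨g, hg⟩ := exists_lt_of_ne_bot hiso f h
    exact absurd (Submodule.finrank_lt_finrank_of_lt hg) (not_lt.2 (hf g))
  refine ⟨graphSet n f, admissible_graphSet n f, card_graphSet n f, ?_⟩
  rw [rkF, rk, hbot, finrank_bot, Nat.sub_zero]
end

section
/- Let n ≥ 2 and let Λ be an n-dimensional isotropic subspace of ℂ^{2n+1}. Then for every admissible subset S ⊆ [n] ∪ [n]̄ one has rk_Λ(S) = max_{S' ∈ 𝒟(Λ)} |S' ∩ S|. -/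
/-!
The coordinate functionals restricted to `Λ` form a matroid on the index set, with rank function
`rk_Λ`. An element of `𝒟(Λ)` is an admissible independent set of size `n`, so its intersection
with `S` is independent, which bounds its size by `rk_Λ(S)`.

For the existence part, take a basis `B ⊆ S` of `S` (`exists_basis`); it is admissible and
independent of size `rk_Λ(S)`, so it suffices to extend it to an element of `𝒟(Λ)`, that is, to
show that an admissible independent set `B` with `|B| < n` can be enlarged (`exists_extension_step`).
Otherwise all coordinates `q, q̄` with neither `q` nor `q̄` in `B` vanish on `Λ ∩ H_B`. A nonzero
vector `y` of this space satisfies `2 y₀² = y·y = 0`, so it is supported on the conjugates of `B`.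
As `y` is orthogonal to `Λ`, it gives a nontrivial linear relation `Σ_{b ∈ B} y_{b̄} z_b = 0`
between the coordinates indexed by `B` on `Λ`, contradicting the independence of `B`.
-/

open scoped BigOperators

/-- `Λ ∩ H_T` for a finite set `T ⊆ [n] ∪ [n]̄`. -/
noncomputable def cutSub (n : ℕ) (Λ : Submodule ℂ (Idx n → ℂ)) (T : Finset (Fin n × Bool)) :
    Submodule ℂ (Idx n → ℂ) :=
  Λ ⊓ coordSub n (finIdx n T)

/-- The coordinates in `T` are linearly independent on the `n`-dimensional space `Λ`, expressed as
`dim(Λ ∩ H_T) ≤ n − |T|`. -/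
def CoordIndep (n : ℕ) (Λ : Submodule ℂ (Idx n → ℂ)) (T : Finset (Fin n × Bool)) : Prop :=
  Module.finrank ℂ (cutSub n Λ T) + T.card ≤ n

section

variable {n : ℕ} {Λ : Submodule ℂ (Idx n → ℂ)}

lemma mem_cutSub {T : Finset (Fin n × Bool)} {v : Idx n → ℂ} :
    v ∈ cutSub n Λ T ↔ v ∈ Λ ∧ ∀ p ∈ T, v (some p) = 0 := by
  unfold cutSub
  rw [Submodule.mem_inf]
  refine and_congr_right fun _ => ?_
  constructor
  · intro h p hp
    exact h (some p) ⟨p, by simpa using hp, rfl⟩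
  · rintro h _ ⟨p, hp, rfl⟩
    exact h p (by simpa using hp)

lemma cutSub_empty : cutSub n Λ ∅ = Λ := by
  ext v
  simp [mem_cutSub]

lemma cutSub_anti {T U : Finset (Fin n × Bool)} (h : T ⊆ U) : cutSub n Λ U ≤ cutSub n Λ T := by
  intro v hv
  rw [mem_cutSub] at hv ⊢
  exact ⟨hv.1, fun p hp => hv.2 p (h hp)⟩

lemma finrank_cutSub_anti {T U : Finset (Fin n × Bool)} (h : T ⊆ U) :
    Module.finrank ℂ (cutSub n Λ U) ≤ Module.finrank ℂ (cutSub n Λ T) :=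
  Submodule.finrank_mono (cutSub_anti h)

lemma finrank_cutSub_insert (p : Fin n × Bool) (T : Finset (Fin n × Bool)) :
    Module.finrank ℂ (cutSub n Λ T) ≤ Module.finrank ℂ (cutSub n Λ (insert p T)) + 1 := by
  let f : cutSub n Λ T →ₗ[ℂ] ℂ := (LinearMap.proj (some p : Idx n)).comp (cutSub n Λ T).subtype
  have h1 := f.finrank_range_add_finrank_ker
  have h2 : Module.finrank ℂ (LinearMap.range f) ≤ 1 := by
    simpa using Submodule.finrank_le (LinearMap.range f)
  have h3 : Module.finrank ℂ (LinearMap.ker f)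
      ≤ Module.finrank ℂ (cutSub n Λ (insert p T)) := by
    rw [← Submodule.finrank_map_subtype_eq]
    refine Submodule.finrank_mono ?_
    rintro _ ⟨v, hv, rfl⟩
    have hv' : v.1 (some p) = 0 := hv
    have := mem_cutSub.1 v.2
    refine mem_cutSub.2 ⟨this.1, fun r hr => ?_⟩
    rcases Finset.mem_insert.1 hr with rfl | hr
    · exact hv'
    · exact this.2 r hr
  omega

lemma finrank_cutSub_union (T U : Finset (Fin n × Bool)) :
    Module.finrank ℂ (cutSub n Λ T) ≤ Module.finrank ℂ (cutSub n Λ (U ∪ T)) + U.card := by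
  induction U using Finset.induction_on with
  | empty => rw [Finset.empty_union, Finset.card_empty, add_zero]
  | insert p U hp ih =>
    have := finrank_cutSub_insert (Λ := Λ) p (U ∪ T)
    rw [Finset.insert_union, Finset.card_insert_of_notMem hp]
    omega

lemma le_finrank_cutSub (hΛ : Module.finrank ℂ Λ = n) (T : Finset (Fin n × Bool)) :
    n ≤ Module.finrank ℂ (cutSub n Λ T) + T.card := by
  have := finrank_cutSub_union (Λ := Λ) ∅ T
  rwa [cutSub_empty, hΛ, Finset.union_empty] at this

lemma CoordIndep.subset {T U : Finset (Fin n × Bool)} (hU : CoordIndep n Λ U) (h : T ⊆ U) :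
    CoordIndep n Λ T := by
  have h1 := finrank_cutSub_union (Λ := Λ) T (U \ T)
  rw [Finset.sdiff_union_of_subset h] at h1
  have h2 := Finset.card_sdiff_add_card_eq_card h
  unfold CoordIndep at *
  omega

/-- A coordinate not vanishing identically on `Λ ∩ H_T` is independent of those in `T`. -/
lemma CoordIndep.insert_coord {T : Finset (Fin n × Bool)} (hT : CoordIndep n Λ T) {p : Fin n × Bool}
    {w : Idx n → ℂ} (hw : w ∈ cutSub n Λ T) (hp : w (some p) ≠ 0) :
    CoordIndep n Λ (insert p T) ∧ p ∉ T := by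
  have hpT : p ∉ T := fun h => hp ((mem_cutSub.1 hw).2 p h)
  refine ⟨?_, hpT⟩
  have hlt : cutSub n Λ (insert p T) < cutSub n Λ T := by
    refine lt_of_le_of_ne (cutSub_anti (Finset.subset_insert _ _)) fun h => ?_
    rw [← h] at hw
    exact hp ((mem_cutSub.1 hw).2 p (Finset.mem_insert_self _ _))
  have := Submodule.finrank_lt_finrank_of_lt hlt
  unfold CoordIndep at *
  rw [Finset.card_insert_of_notMem hpT]
  omega

lemma cutSub_insert_congr {T U : Finset (Fin n × Bool)} (h : cutSub n Λ T = cutSub n Λ U)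
    (p : Fin n × Bool) : cutSub n Λ (insert p T) = cutSub n Λ (insert p U) := by
  ext v
  have := SetLike.ext_iff.1 h v
  simp only [mem_cutSub, Finset.forall_mem_insert] at this ⊢
  tauto

lemma exists_basis (hΛ : Module.finrank ℂ Λ = n) (S : Finset (Fin n × Bool)) :
    ∃ B ⊆ S, CoordIndep n Λ B ∧ cutSub n Λ B = cutSub n Λ S := by
  induction S using Finset.induction_on with
  | empty => exact ⟨∅, subset_rfl, by
      rw [CoordIndep, cutSub_empty, hΛ, Finset.card_empty, add_zero], rfl⟩
  | insert p S hpS ih =>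
    obtain ⟨B, hBS, hB, hEq⟩ := ih
    by_cases h : ∀ w ∈ cutSub n Λ B, w (some p) = 0
    · refine ⟨B, hBS.trans (Finset.subset_insert _ _), hB, ?_⟩
      rw [← cutSub_insert_congr hEq]
      refine le_antisymm (fun w hw => ?_) (cutSub_anti (Finset.subset_insert _ _))
      rw [mem_cutSub, Finset.forall_mem_insert]
      exact ⟨(mem_cutSub.1 hw).1, h w hw, (mem_cutSub.1 hw).2⟩
    · push Not at h
      obtain ⟨w, hw, hwp⟩ := h
      exact ⟨insert p B, Finset.insert_subset_insert _ hBS, (hB.insert_coord hw hwp).1,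
        cutSub_insert_congr hEq p⟩

lemma bform_eq_sum (y z : Idx n → ℂ) :
    bform n y z = 2 * y none * z none +
      ∑ p : Fin n × Bool, y (some (p.1, !p.2)) * z (some p) := by
  simp [bform, Fintype.sum_prod_type]

/-- If `B` is independent, `Λ` admits no relation `Σ_{b ∈ B} c_b z_b = 0` with some `c_b ≠ 0`. -/
lemma CoordIndep.no_relation (hΛ : Module.finrank ℂ Λ = n) {B : Finset (Fin n × Bool)}
    (hB : CoordIndep n Λ B) (c : Fin n × Bool → ℂ)
    (hc : ∀ z ∈ Λ, ∑ b ∈ B, c b * z (some b) = 0) : ∀ b ∈ B, c b = 0 := by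
  intro b hb
  by_contra hcb
  -- The relation expresses `z_b` through the other coordinates, so `b` is redundant in `B`.
  have hle : cutSub n Λ (B.erase b) ≤ cutSub n Λ B := by
    intro z hz
    rw [mem_cutSub] at hz ⊢
    refine ⟨hz.1, fun r hr => ?_⟩
    by_cases hrb : r = b
    · subst hrb
      have h := hc z hz.1
      rw [Finset.sum_eq_single_of_mem r hr
        (fun s hs hsr => by rw [hz.2 s (Finset.mem_erase.2 ⟨hsr, hs⟩), mul_zero])] at h
      exact (mul_eq_zero.1 h).resolve_left hcb
    · exact hz.2 r (Finset.mem_erase.2 ⟨hrb, hr⟩)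
  have h1 := Submodule.finrank_mono hle
  have h2 := le_finrank_cutSub hΛ (B.erase b)
  have h3 := Finset.card_erase_add_one hb
  unfold CoordIndep at hB
  omega

lemma Admissible.insert_coord {B : Finset (Fin n × Bool)} (hB : Admissible n B)
    {p : Fin n × Bool} (hp : (p.1, !p.2) ∉ B) : Admissible n (insert p B) := by
  rintro q ⟨h1, h2⟩
  rw [Finset.mem_insert] at h1 h2
  rcases h1 with rfl | h1 <;> rcases h2 with h2 | h2
  · simp at h2
  · exact hp h2
  · subst h2
    exact hp h1
  · exact hB q ⟨h1, h2⟩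

lemma exists_extension_step (hiso : IsIsotropic n Λ) (hΛ : Module.finrank ℂ Λ = n)
    {B : Finset (Fin n × Bool)} (hadm : Admissible n B) (hB : CoordIndep n Λ B)
    (hcard : B.card < n) :
    ∃ p, p ∉ B ∧ Admissible n (insert p B) ∧ CoordIndep n Λ (insert p B) := by
  by_contra hcon
  push Not at hcon
  have hvanish : ∀ w ∈ cutSub n Λ B, ∀ p : Fin n × Bool, (p.1, !p.2) ∉ B → w (some p) = 0 := by
    intro w hw p hp
    by_contra hne
    obtain ⟨hind, hpB⟩ := hB.insert_coord hw hne
    exact hcon p hpB (hadm.insert_coord hp) hind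
  obtain ⟨y, hy, hy0⟩ : ∃ y ∈ cutSub n Λ B, y ≠ 0 := by
    apply Submodule.exists_mem_ne_zero_of_ne_bot
    intro h
    have := le_finrank_cutSub hΛ B
    rw [h, finrank_bot] at this
    omega
  have hyΛ := (mem_cutSub.1 hy).1
  have hyB := (mem_cutSub.1 hy).2
  have hynone : y none = 0 := by
    have h := hiso y hyΛ y hyΛ
    rw [bform_eq_sum, Finset.sum_eq_zero] at h
    · simpa using h
    · intro p _
      by_cases hp : p ∈ B
      · rw [hyB p hp, mul_zero]
      · rw [hvanish y hy (p.1, !p.2) (by simpa using hp), zero_mul]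
  have hrel := hB.no_relation hΛ (fun b => y (some (b.1, !b.2))) (fun z hz => by
    have h := hiso y hyΛ z hz
    rw [bform_eq_sum, hynone, mul_zero, zero_mul, zero_add] at h
    rw [← h]
    refine Finset.sum_subset (Finset.subset_univ _) fun p _ hp => ?_
    rw [hvanish y hy (p.1, !p.2) (by simpa using hp), zero_mul])
  apply hy0
  funext i
  rcases i with _ | p
  · exact hynone
  · by_cases hp : (p.1, !p.2) ∈ B
    · simpa using hrel _ hp
    · exact hvanish y hy p hp

lemma exists_extension (hiso : IsIsotropic n Λ) (hΛ : Module.finrank ℂ Λ = n) (k : ℕ) :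
    ∀ B : Finset (Fin n × Bool), Admissible n B → CoordIndep n Λ B → B.card + k = n →
      ∃ S', B ⊆ S' ∧ Admissible n S' ∧ CoordIndep n Λ S' ∧ S'.card = n := by
  induction k with
  | zero => exact fun B hadm hB hk => ⟨B, subset_rfl, hadm, hB, hk⟩
  | succ k ih =>
    intro B hadm hB hk
    obtain ⟨p, hp, hadm', hB'⟩ := exists_extension_step hiso hΛ hadm hB (by omega)
    obtain ⟨S', h1, h2⟩ := ih (insert p B) hadm' hB' (by
      rw [Finset.card_insert_of_notMem hp]; omega)
    exact ⟨S', (Finset.subset_insert _ _).trans h1, h2⟩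

lemma rkF_eq (T : Finset (Fin n × Bool)) :
    rkF n Λ T = n - Module.finrank ℂ (cutSub n Λ T) := rfl

end

theorem stmt4 (n : ℕ) (hn : 2 ≤ n)
    (Λ : Submodule ℂ (Idx n → ℂ)) (hiso : IsIsotropic n Λ)
    (hΛ : Module.finrank ℂ ↥Λ = n)
    (S : Finset (Fin n × Bool)) (hS : Admissible n S) :
    (∃ S' ∈ deltaMatroid n Λ, (S' ∩ S).card = rkF n Λ S) ∧
      (∀ S' ∈ deltaMatroid n Λ, (S' ∩ S).card ≤ rkF n Λ S) := by
  have upper : ∀ S' ∈ deltaMatroid n Λ, (S' ∩ S).card ≤ rkF n Λ S := by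
    rintro S' ⟨-, hcard, hrk⟩
    rw [rkF_eq] at hrk
    have hind : CoordIndep n Λ S' := by
      unfold CoordIndep
      omega
    have h1 := hind.subset (Finset.inter_subset_left (s₂ := S))
    have h2 := finrank_cutSub_anti (Λ := Λ) (Finset.inter_subset_right (s₁ := S') (s₂ := S))
    rw [rkF_eq]
    unfold CoordIndep at h1
    omega
  refine ⟨?_, upper⟩
  obtain ⟨B, hBS, hB, hEq⟩ := exists_basis hΛ S
  have hBn : B.card ≤ n := by
    unfold CoordIndep at hB
    omega
  obtain ⟨S', hBS', hadm, hind, hcard⟩ := exists_extension hiso hΛ (n - B.card) B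
    (fun q hq => hS q ⟨hBS hq.1, hBS hq.2⟩) hB (by omega)
  have hmem : S' ∈ deltaMatroid n Λ := by
    refine ⟨hadm, hcard, ?_⟩
    rw [rkF_eq]
    unfold CoordIndep at hind
    omega
  refine ⟨S', hmem, le_antisymm (upper S' hmem) ?_⟩
  have h1 := Finset.card_le_card (Finset.subset_inter hBS' hBS)
  have h2 := le_finrank_cutSub hΛ B
  rw [rkF_eq, ← hEq]
  omega
end

section
/- Let n ≥ 2 and let Λ be an n-dimensional isotropic subspace of ℂ^{2n+1}. Then the convex hull 𝒳(Λ) in ℝⁿ of the vectors χ(S') for S' ∈ 𝒟(Λ) is equal to the polytope 𝒫(Λ). -/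
/-!
Write `y_q = x_q` and `y_{q̄} = 1 - x_q`. Then `x(S) ≤ g_Λ(S)` says `∑_{p ∈ S} y_p ≤ rk_Λ(S)`, and
`rk_Λ(S)` is the dimension of the span of the coordinate functionals `p ∈ S` on `Λ` (`rkF_eq`).

The vectors `χ(B)`, `B ∈ 𝒟(Λ)`, satisfy these inequalities because the coordinates in `B` form a
basis of the dual of `Λ`, so `|S ∩ B| ≤ rk_Λ(S)` (`chi_mem_polytopeP`).

Conversely, a point of `𝒫(Λ)` outside the hull would be separated from it by a functional `w`.
Let `ε` record the signs of `w`, so that `w` pairs nonnegatively with the coordinates `(i, ε i)`.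
The greedy algorithm, run on these coordinates in decreasing order of `|w i|`, gives a set `I` which
is a basis of their span, and Abel summation shows that its weight bounds `∑ |w i| y_{(i, ε i)}`
(`exists_greedy_basis`). Finally `B = {(i, ε i) : i ∈ I} ∪ {(i, !ε i) : i ∉ I}` lies in `𝒟(Λ)`
(`flip_mem_deltaMatroid`), since a vector `v ∈ Λ` vanishing on `B` vanishes at all `(i, ε i)`;
isotropy `v · v = 0` then kills `v₀`, and `v · Λ = 0` together with the independence of the
coordinates in `I` kills the rest. Thus `w` is at least as large at `χ(B)` as at the given point,
a contradiction.
-/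

open scoped BigOperators

/-- The coordinate functional `v ↦ v_p` restricted to `Λ`. -/
def coordFun (n : ℕ) (Λ : Submodule ℂ (Idx n → ℂ)) (p : Fin n × Bool) : Module.Dual ℂ Λ :=
  (LinearMap.proj (some p : Idx n)).comp Λ.subtype

@[simp]
lemma coordFun_apply (n : ℕ) (Λ : Submodule ℂ (Idx n → ℂ)) (p : Fin n × Bool) (v : Λ) :
    coordFun n Λ p v = (v : Idx n → ℂ) (some p) := rfl

lemma rkF_eq_s6 (n : ℕ) (Λ : Submodule ℂ (Idx n → ℂ)) (hΛ : Module.finrank ℂ ↥Λ = n)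
    (S : Finset (Fin n × Bool)) :
    rkF n Λ S = Module.finrank ℂ (Submodule.span ℂ (coordFun n Λ '' S)) := by
  have h1 := Subspace.finrank_add_finrank_dualCoannihilator_eq
    (Submodule.span ℂ (coordFun n Λ '' S))
  have h2 : (Submodule.span ℂ (coordFun n Λ '' S)).dualCoannihilator =
      Submodule.comap Λ.subtype (coordSub n (finIdx n S)) := by
    ext v
    rw [Submodule.mem_dualCoannihilator, Submodule.mem_comap]
    constructor
    · rintro h _ ⟨p, hp, rfl⟩
      exact h (coordFun n Λ p) (Submodule.subset_span ⟨p, hp, rfl⟩)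
    · intro h φ hφ
      have hle : Submodule.span ℂ (coordFun n Λ '' S) ≤
          LinearMap.ker (Module.Dual.eval ℂ Λ v) := by
        rw [Submodule.span_le]
        rintro _ ⟨p, hp, rfl⟩
        exact h (some p) ⟨p, hp, rfl⟩
      exact hle hφ
  rw [h2, ← Submodule.finrank_map_subtype_eq, Submodule.map_comap_subtype, hΛ] at h1
  unfold rkF rk
  omega

/-- The affine coordinates `y_q = x_q` and `y_{q̄} = 1 - x_q`, in which the inequalities defining
`𝒫(Λ)` become `∑_{p ∈ S} y_p ≤ rk_Λ(S)`. -/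
def yval (n : ℕ) (x : Fin n → ℝ) (p : Fin n × Bool) : ℝ :=
  if p.2 = true then 1 - x p.1 else x p.1

lemma xval_le_gF_iff (n : ℕ) (Λ : Submodule ℂ (Idx n → ℂ)) (hΛ : Module.finrank ℂ ↥Λ = n)
    (x : Fin n → ℝ) (S : Finset (Fin n × Bool)) :
    xval n x S ≤ (gF n Λ S : ℝ) ↔ ∑ p ∈ S, yval n x p ≤
      (Module.finrank ℂ (Submodule.span ℂ (coordFun n Λ '' S)) : ℝ) := by
  have h : xval n x S = ∑ p ∈ S, yval n x p - ((S.filter fun p => p.2 = true).card : ℝ) := by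
    unfold xval yval
    rw [Finset.card_filter, Finset.sum_filter, Finset.sum_filter]
    push_cast
    rw [← Finset.sum_sub_distrib, ← Finset.sum_sub_distrib]
    refine Finset.sum_congr rfl fun p _ => ?_
    rcases p with ⟨i, b⟩
    cases b <;> simp
  rw [h, gF, rkF_eq_s6 n Λ hΛ]
  push_cast
  constructor <;> intro h <;> linarith

lemma convex_polytopeP (n : ℕ) (Λ : Submodule ℂ (Idx n → ℂ)) : Convex ℝ (polytopeP n Λ) := by
  intro x hx z hz a b ha hb hab S hS
  have h : xval n (a • x + b • z) S = a * xval n x S + b * xval n z S := by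
    simp only [xval, Pi.add_apply, Pi.smul_apply, smul_eq_mul, Finset.sum_add_distrib,
      ← Finset.mul_sum]
    ring
  rw [h]
  calc a * xval n x S + b * xval n z S ≤ a * (gF n Λ S : ℝ) + b * (gF n Λ S : ℝ) := by
        gcongr
        · exact hx S hS
        · exact hz S hS
    _ = (gF n Λ S : ℝ) := by rw [← add_mul, hab, one_mul]

lemma bar_mem_iff {n : ℕ} {B : Finset (Fin n × Bool)} (hB : Admissible n B) (hc : B.card = n)
    (i : Fin n) : (i, true) ∈ B ↔ (i, false) ∉ B := by
  have hinj : Set.InjOn Prod.fst (B : Set (Fin n × Bool)) := by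
    rintro ⟨i, b⟩ hb ⟨j, c⟩ hc (rfl : i = j)
    have := hB i
    cases b <;> cases c <;> simp_all
  have himg : B.image Prod.fst = Finset.univ := by
    apply Finset.eq_univ_of_card
    rw [Finset.card_image_of_injOn hinj, hc, Fintype.card_fin]
  have hi : i ∈ B.image Prod.fst := by rw [himg]; exact Finset.mem_univ i
  obtain ⟨⟨j, b⟩, hb, rfl⟩ := Finset.mem_image.mp hi
  have := hB j
  cases b <;> simp_all

lemma chi_mem_polytopeP (n : ℕ) (Λ : Submodule ℂ (Idx n → ℂ)) (hΛ : Module.finrank ℂ ↥Λ = n)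
    (B : Finset (Fin n × Bool)) (hB : B ∈ deltaMatroid n Λ) : chi n B ∈ polytopeP n Λ := by
  classical
  obtain ⟨hadm, hcard, hrk⟩ := hB
  intro S _
  rw [xval_le_gF_iff n Λ hΛ]
  have hy : ∀ p, yval n (chi n B) p = if p ∈ B then 1 else 0 := by
    rintro ⟨i, b⟩
    have := bar_mem_iff hadm hcard i
    cases b
    · simp [yval, chi]
    · by_cases h : (i, false) ∈ B <;> simp_all [yval, chi]
  simp only [hy]
  rw [← Finset.sum_filter, Finset.sum_const, nsmul_eq_mul, mul_one, Nat.cast_le,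
    Finset.filter_mem_eq_inter]
  rw [rkF_eq_s6 n Λ hΛ] at hrk
  -- The rank of `B` is at most the rank of `S` plus `|B \ S|`.
  have hsub : Submodule.span ℂ (coordFun n Λ '' B) ≤
      Submodule.span ℂ (coordFun n Λ '' S) ⊔
        Submodule.span ℂ (((B \ S).image (coordFun n Λ) : Finset _) : Set (Module.Dual ℂ Λ)) := by
    rw [← Submodule.span_union]
    apply Submodule.span_mono
    rintro _ ⟨p, hp, rfl⟩
    by_cases hS : p ∈ S
    · exact Or.inl ⟨p, hS, rfl⟩
    · refine Or.inr ?_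
      rw [Finset.coe_image]
      exact ⟨p, by simpa using ⟨hp, hS⟩, rfl⟩
  have h1 := (Submodule.finrank_mono hsub).trans
    (Submodule.finrank_add_le_finrank_add_finrank _ _)
  have h2 := (finrank_span_finset_le_card (R := ℂ) ((B \ S).image (coordFun n Λ))).trans
    Finset.card_image_le
  rw [Set.finrank] at h2
  have h3 := Finset.card_sdiff_add_card_inter B S
  rw [Finset.inter_comm] at h3
  omega

/-- The greedy algorithm for the linear matroid of `f`: if `y(T) ≤ rk(T)` for all `T`, then the
set `I` found by processing indices in decreasing order of the weight `a` is a basis of the span of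
`f` on `T`, and its weight is at least `∑ a i * y i`. The shift `c` makes the induction work: adding
an index `j` of smallest weight, one applies the inductive hypothesis with `c = a j`. -/
lemma exists_greedy_basis {ι V : Type*} [DecidableEq ι] [AddCommGroup V] [Module ℂ V]
    (f : ι → V) (a y : ι → ℝ)
    (hy : ∀ T : Finset ι, ∑ i ∈ T, y i ≤
      (Module.finrank ℂ (Submodule.span ℂ (f '' (T : Set ι))) : ℝ)) (T : Finset ι) :
    ∃ I : Finset ι, I ⊆ T ∧ LinearIndepOn ℂ f (I : Set ι) ∧
      Submodule.span ℂ (f '' (I : Set ι)) = Submodule.span ℂ (f '' (T : Set ι)) ∧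
      ∀ c, (∀ i ∈ T, c ≤ a i) → ∑ i ∈ T, (a i - c) * y i ≤ ∑ i ∈ I, (a i - c) := by
  induction T using Finset.induction_on_min_value a with
  | empty => exact ⟨∅, by simp⟩
  | insert j T hj hmin ih =>
    obtain ⟨I, hIT, hind, hspan, hle⟩ := ih
    have hjI : j ∉ I := fun h => hj (hIT h)
    -- A basis `J ∈ {I, I ∪ {j}}` of the enlarged span; the two sets have the same weight after
    -- shifting by `a j`.
    obtain ⟨J, hJT, hJind, hJspan, hJsum⟩ : ∃ J : Finset ι, J ⊆ insert j T ∧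
        LinearIndepOn ℂ f (J : Set ι) ∧
        Submodule.span ℂ (f '' (J : Set ι)) =
          Submodule.span ℂ (f '' ((insert j T : Finset ι) : Set ι)) ∧
        ∑ i ∈ J, (a i - a j) = ∑ i ∈ I, (a i - a j) := by
      by_cases hmem : f j ∈ Submodule.span ℂ (f '' (I : Set ι))
      · refine ⟨I, hIT.trans (Finset.subset_insert _ _), hind, ?_, rfl⟩
        rw [Finset.coe_insert, Set.image_insert_eq, Submodule.span_insert_eq_span]
        · exact hspan
        · rwa [← hspan]
      · refine ⟨insert j I, Finset.insert_subset_insert _ hIT, ?_, ?_, ?_⟩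
        · rw [Finset.coe_insert]
          exact hind.insert hmem
        · rw [Finset.coe_insert, Finset.coe_insert, Set.image_insert_eq, Set.image_insert_eq,
            Submodule.span_insert, Submodule.span_insert, hspan]
        · rw [Finset.sum_insert hjI, sub_self, zero_add]
    refine ⟨J, hJT, hJind, hJspan, fun c hc => ?_⟩
    have hcard : Module.finrank ℂ (Submodule.span ℂ (f '' (J : Set ι))) = J.card := by
      have h := finrank_span_eq_card (R := ℂ) hJind
      rw [← Set.image_eq_range] at h
      simpa using h
    have h1 := hy (insert j T)
    rw [← hJspan, hcard] at h1
    have h2 := hle (a j) hmin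
    have h3 : 0 ≤ a j - c := sub_nonneg.mpr (hc j (Finset.mem_insert_self _ _))
    have h4 : ∑ i ∈ insert j T, (a i - c) * y i =
        ∑ i ∈ T, (a i - a j) * y i + (a j - c) * ∑ i ∈ insert j T, y i := by
      rw [Finset.mul_sum, Finset.sum_insert hj, Finset.sum_insert hj, add_left_comm,
        ← Finset.sum_add_distrib]
      congr 1
      exact Finset.sum_congr rfl fun i _ => by ring
    have h5 : ∑ i ∈ J, (a i - c) = ∑ i ∈ J, (a i - a j) + (a j - c) * J.card := by
      rw [mul_comm, ← nsmul_eq_mul, ← Finset.sum_const, ← Finset.sum_add_distrib]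
      exact Finset.sum_congr rfl fun i _ => by ring
    rw [h4, h5, hJsum]
    exact add_le_add h2 (mul_le_mul_of_nonneg_left h1 h3)

/-- The maximal admissible set choosing `(i, ε i)` for `i ∈ I` and `(i, !ε i)` for `i ∉ I`. -/
def flipSet (n : ℕ) (ε : Fin n → Bool) (I : Finset (Fin n)) : Finset (Fin n × Bool) :=
  Finset.univ.image fun i => (i, if i ∈ I then ε i else !ε i)

lemma mem_flipSet {n : ℕ} {ε : Fin n → Bool} {I : Finset (Fin n)} {i : Fin n} {b : Bool} :
    (i, b) ∈ flipSet n ε I ↔ b = if i ∈ I then ε i else !ε i := by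
  simp [flipSet, eq_comm]

lemma flip_mem_deltaMatroid (n : ℕ) (Λ : Submodule ℂ (Idx n → ℂ)) (hiso : IsIsotropic n Λ)
    (ε : Fin n → Bool) (I : Finset (Fin n))
    (hind : LinearIndepOn ℂ (fun i => coordFun n Λ (i, ε i)) (I : Set (Fin n)))
    (hspan : ∀ i, coordFun n Λ (i, ε i) ∈
      Submodule.span ℂ ((fun i => coordFun n Λ (i, ε i)) '' (I : Set (Fin n)))) :
    flipSet n ε I ∈ deltaMatroid n Λ := by
  refine ⟨?_, ?_, ?_⟩
  · rintro i ⟨h1, h2⟩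
    rw [mem_flipSet] at h1 h2
    rw [← h1] at h2
    cases h2
  · rw [flipSet, Finset.card_image_of_injective, Finset.card_univ, Fintype.card_fin]
    intro i j h
    exact congrArg Prod.fst h
  have hbot : Λ ⊓ coordSub n (finIdx n (flipSet n ε I)) = ⊥ := by
    rw [eq_bot_iff]
    rintro v ⟨hvΛ, hv⟩
    have hv' : ∀ i, v (some (i, if i ∈ I then ε i else !ε i)) = 0 := fun i =>
      hv _ ⟨_, mem_flipSet.mpr rfl, rfl⟩
    have hε : ∀ i, v (some (i, ε i)) = 0 := by
      intro i
      have hle : Submodule.span ℂ ((fun i => coordFun n Λ (i, ε i)) '' (I : Set (Fin n))) ≤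
          LinearMap.ker (Module.Dual.eval ℂ Λ ⟨v, hvΛ⟩) := by
        rw [Submodule.span_le]
        rintro _ ⟨k, hk, rfl⟩
        have h := hv' k
        rw [if_pos (Finset.mem_coe.mp hk)] at h
        exact h
      exact hle (hspan i)
    have hform : ∀ u : Idx n → ℂ, bform n v u =
        2 * v none * u none + ∑ i, v (some (i, !ε i)) * u (some (i, ε i)) := by
      intro u
      unfold bform
      congr 1
      refine Finset.sum_congr rfl fun i _ => ?_
      have h := hε i
      cases hi : ε i <;> rw [hi] at h <;> simp [h]
    have h0 : v none = 0 := by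
      have h := hiso v hvΛ v hvΛ
      rw [hform] at h
      simpa [hε] using h
    have hcomb : ∑ i ∈ I, v (some (i, !ε i)) • coordFun n Λ (i, ε i) = 0 := by
      ext u
      have h := hiso v hvΛ u u.2
      rw [hform, h0, mul_zero, zero_mul, zero_add] at h
      rw [← Finset.sum_subset (Finset.subset_univ I)] at h
      · simpa using h
      · intro i _ hi
        have h := hv' i
        rw [if_neg hi] at h
        rw [h, zero_mul]
    have hbar : ∀ i, v (some (i, !ε i)) = 0 := by
      intro i
      by_cases hi : i ∈ I
      · exact linearIndepOn_finset_iff.mp hind _ hcomb i hi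
      · have h := hv' i
        rwa [if_neg hi] at h
    rw [Submodule.mem_bot]
    funext k
    rcases k with _ | ⟨i, b⟩
    · exact h0
    · rcases Bool.eq_or_eq_not b (ε i) with rfl | rfl
      · exact hε i
      · exact hbar i
  rw [rkF, rk, hbot, finrank_bot, Nat.sub_zero]

theorem stmt6 (n : ℕ) (hn : 2 ≤ n)
    (Λ : Submodule ℂ (Idx n → ℂ)) (hiso : IsIsotropic n Λ)
    (hΛ : Module.finrank ℂ ↥Λ = n) :
    convexHull ℝ (chi n '' deltaMatroid n Λ) = polytopeP n Λ := by
  apply Set.Subset.antisymm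
  · refine convexHull_min ?_ (convex_polytopeP n Λ)
    rintro _ ⟨B, hB, rfl⟩
    exact chi_mem_polytopeP n Λ hΛ B hB
  intro x hx
  by_contra hnot
  obtain ⟨φ, u, hφ, hu⟩ := geometric_hahn_banach_closed_point (convex_convexHull ℝ _)
    (Set.Finite.isClosed_convexHull ℝ ((deltaMatroid n Λ).toFinite.image (chi n))) hnot
  obtain ⟨w, hw⟩ : ∃ w : Fin n → ℝ, ∀ z, φ z = ∑ i, z i * w i :=
    ⟨_, fun z => LinearMap.pi_apply_eq_sum_univ φ.toLinearMap z⟩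
  set ε : Fin n → Bool := fun i => decide (w i < 0) with hε
  obtain ⟨I, -, hind, hspan, hle⟩ := exists_greedy_basis (fun i => coordFun n Λ (i, ε i))
    (fun i => |w i|) (fun i => yval n x (i, ε i)) (by
      intro T
      have hadm : Admissible n (T.image fun i => (i, ε i)) := by
        rintro q ⟨h1, h2⟩
        simp only [Finset.mem_image, Prod.mk.injEq] at h1 h2
        obtain ⟨i, -, rfl, h1⟩ := h1
        obtain ⟨j, -, rfl, h2⟩ := h2
        rw [h1] at h2
        cases h2
      have h := (xval_le_gF_iff n Λ hΛ x _).mp (hx _ hadm)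
      rw [Finset.sum_image (fun i _ j _ h => congrArg Prod.fst h), Finset.coe_image,
        Set.image_image] at h
      exact h) Finset.univ
  have hB := flip_mem_deltaMatroid n Λ hiso ε I hind (fun i => by
    rw [hspan]
    exact Submodule.subset_span ⟨i, by simp, rfl⟩)
  have h1 := hφ _ (subset_convexHull ℝ _ ⟨_, hB, rfl⟩)
  have h2 := hle 0 (fun i _ => abs_nonneg _)
  simp only [sub_zero] at h2
  -- Both values of `φ` are shifted by the same constant, the sum of `w i` over negative `w i`.
  have h3 : ∀ i, x i * w i = |w i| * yval n x (i, ε i) + (if w i < 0 then w i else 0) := by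
    intro i
    by_cases hi : w i < 0
    · simp only [yval, hε, hi, decide_true, if_true, abs_of_neg hi]
      ring
    · simp only [yval, hε, hi, decide_false, if_false, abs_of_nonneg (not_lt.mp hi),
        Bool.false_eq_true]
      ring
  have h4 : ∀ i, chi n (flipSet n ε I) i * w i =
      (if i ∈ I then |w i| else 0) + (if w i < 0 then w i else 0) := by
    intro i
    by_cases hi : w i < 0 <;> by_cases hI : i ∈ I <;>
      simp [chi, mem_flipSet, hε, hi, hI, abs_of_neg, abs_of_nonneg, not_lt.mp]
  rw [hw] at h1 hu
  simp only [h3, h4, Finset.sum_add_distrib, Finset.sum_ite_mem, Finset.univ_inter] at h1 hu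
  linarith
end
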